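/- Let A ⊆ ℤ^d be a finite positively generating set with 0 ∈ A. For every face F of conv(A) there exists a unique A-horoball H ⊆ ℤ^d with 0 ∈ H and conv(H) = Env_F, and this horoball is H_F = Σ_{w ∈ Ext(F)} ⋃_{j≥0} j(A − w). Conversely, every A-horoball is of the form v + H_F for some v ∈ ℤ^d and some face F of conv(A), and the face F is uniquely determined. -/

import Mathlib

/-!
For `S ⊆ A`, let `M(S)` (`diffMonoid A S` below) be the submonoid of `ℤ^d` generated by `A - S`.

Let a horoball `H` be a limit of balls `g i + n i A`, all of which contain a fixed point `h`. Write
`h = g i + ∑ a, c i a • a` with weights of total `n i`; then the ball is `h + ∑ a, c i a • (A - a)`.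
Along a subsequence every weight is constant or increases to infinity. If `T` is the nonempty set of
those `a` whose weights are unbounded, the unbounded summands exhaust `M(T)`, and the remaining ones
only translate it, since `A + M(T) = w + M(T)` for `w ∈ T`. So `H` is a translate of `M(T)`.

If an integral point lies in the real cone spanned by a submonoid `M` of `ℤ^d`, then a positive
multiple of it lies in `M`, by Farkas' lemma over `ℚ`. If its negative is in `M`, it therefore is in
`M` itself. Hence `M(T)` only depends on its real cone, which is the cone of feasible directions of
`conv(A)` at the smallest face containing `T`, and a face is determined by this cone.

That cone is `Env_F`: a point outside it is separated from it by a functional, and one with the most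
zeros among the generators of the cone is the inward normal of a facet containing `F`.
-/

open Filter Set
open scoped Pointwise

/-- `A ⊆ ℤ^d` is positively generating: every point is in some `n`-fold
Minkowski sum `nA`, `n ≥ 1`. -/
def PosGenZ {d : ℕ} (A : Set (Fin d → ℤ)) : Prop :=
  ∀ g : Fin d → ℤ, ∃ n : ℕ, 1 ≤ n ∧ g ∈ n • A

/-- The canonical embedding `ℤ^d → ℝ^d`. -/
def coeR {d : ℕ} : (Fin d → ℤ) → (Fin d → ℝ) := fun x i => (x i : ℝ)

/-- Convergence of a sequence of subsets in the product topology on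
`{0,1}^{ℤ^d}`: pointwise eventual agreement of membership. -/
def ConvergesTo {α : Type*} (s : ℕ → Set α) (S : Set α) : Prop :=
  ∀ a : α, ∀ᶠ i in atTop, (a ∈ s i ↔ a ∈ S)

/-- An `A`-horoball: a nonempty proper subset of `ℤ^d` that is a limit of
translated balls `g_i + n_i A` with radii `n_i → ∞`. -/
def IsHoroballZ {d : ℕ} (A H : Set (Fin d → ℤ)) : Prop :=
  H.Nonempty ∧ H ≠ univ ∧
    ∃ (g : ℕ → (Fin d → ℤ)) (n : ℕ → ℕ), Tendsto n atTop atTop ∧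
      ConvergesTo (fun i => (g i + ·) '' (n i • A)) H

/-- A (nonempty, proper) face of a convex set `P ⊆ ℝ^d`: a nonempty convex
extreme subset different from `P`. -/
def IsProperFace {d : ℕ} (P F : Set (Fin d → ℝ)) : Prop :=
  F.Nonempty ∧ F ≠ P ∧ Convex ℝ F ∧ IsExtreme ℝ P F

/-- The standard dot product on `ℝ^d`. -/
def dotp {d : ℕ} (ℓ x : Fin d → ℝ) : ℝ := ∑ i, ℓ i * x i

/-- A `(d-1)`-dimensional face of `P`. -/
def IsFacet {d : ℕ} (P F : Set (Fin d → ℝ)) : Prop :=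
  IsProperFace P F ∧ Module.finrank ℝ (vectorSpan ℝ F) = d - 1

/-- The envelope `Env_F` of `A` with respect to a face `F` of `P = conv(A)`:
the intersection of the half-spaces `{x : ⟨ℓ_{F'}, x⟩ ≥ 0}` over all
`(d-1)`-dimensional faces `F'` of `P` containing `F`, where `ℓ_{F'}` is the
inward normal of `F'` (characterized by being nonzero, orthogonal to
differences of points of `F'`, and pairing nonnegatively with `u - v` for
`u ∈ P`, `v ∈ F'`). -/
def EnvF {d : ℕ} (P F : Set (Fin d → ℝ)) : Set (Fin d → ℝ) :=
  {x | ∀ F' : Set (Fin d → ℝ), IsFacet P F' → F ⊆ F' →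
    ∀ ℓ : Fin d → ℝ, ℓ ≠ 0 →
      (∀ u ∈ F', ∀ v ∈ F', dotp ℓ (u - v) = 0) →
      (∀ u ∈ P, ∀ v ∈ F', 0 ≤ dotp ℓ (u - v)) →
      0 ≤ dotp ℓ x}

/-- The lattice points of `ℤ^d` that are extreme points of `F ⊆ ℝ^d`. -/
def ExtZ {d : ℕ} (F : Set (Fin d → ℝ)) : Set (Fin d → ℤ) :=
  coeR ⁻¹' (F.extremePoints ℝ)

/-- `H_F = Σ_{w ∈ Ext(F)} ⋃_{j ≥ 0} j(A - w)`: the additive subsemigroup of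
`ℤ^d` containing `0` generated by `{u - v : u ∈ A, v ∈ Ext(F)}`. -/
def HF {d : ℕ} (A : Set (Fin d → ℤ)) (F : Set (Fin d → ℝ)) :
    Set (Fin d → ℤ) :=
  (AddSubmonoid.closure {x : Fin d → ℤ | ∃ u ∈ A, ∃ v ∈ ExtZ F, x = u - v} :
    Set (Fin d → ℤ))

section Farkas

variable {K V ι : Type*} [Field K] [LinearOrder K] [IsStrictOrderedRing K]
  [AddCommGroup V] [Module K V]

lemma dual_nonneg_of_mem_hull {s : Set V} {l : Module.Dual K V} (hl : ∀ y ∈ s, 0 ≤ l y) {x : V}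
    (hx : x ∈ PointedCone.hull K s) : 0 ≤ l x :=
  Submodule.span_le (p := (PointedCone.positive K K).comap l) |>.2 hl hx

lemma map_hull {W : Type*} [AddCommGroup W] [Module K W] (φ : V →ₗ[K] W) (s : Set V) :
    (PointedCone.hull K s).map φ = PointedCone.hull K (φ '' s) :=
  Submodule.map_span _ _

lemma mem_hull_insert {a x : V} {s : Set V} :
    x ∈ PointedCone.hull K (insert a s) ↔ ∃ r : K, 0 ≤ r ∧ x - r • a ∈ PointedCone.hull K s := by
  rw [Submodule.mem_span_insert]
  constructor
  · rintro ⟨r, z, hz, rfl⟩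
    exact ⟨r, r.2, (add_sub_cancel_left (r.1 • a) z).symm ▸ hz⟩
  · rintro ⟨r, hr, hz⟩
    exact ⟨⟨r, hr⟩, _, hz, (add_sub_cancel (r • a) x).symm⟩

theorem exists_dual_neg_of_notMem_hull {s : Set ι} (hs : s.Finite) (f : ι → V) {x : V}
    (hx : x ∉ PointedCone.hull K (f '' s)) :
    ∃ l : Module.Dual K V, (∀ i ∈ s, 0 ≤ l (f i)) ∧ l x < 0 := by
  induction s, hs using Set.Finite.induction_on generalizing f x with
  | empty =>
    have hx0 : x ≠ 0 := fun h => hx (h ▸ zero_mem _)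
    obtain ⟨l, hl⟩ : ∃ l : Module.Dual K V, l x ≠ 0 := by
      by_contra! h
      exact hx0 ((Module.forall_dual_apply_eq_zero_iff K x).mp h)
    rcases hl.lt_or_gt with h | h
    · exact ⟨l, by simp, h⟩
    · exact ⟨-l, by simp, by simpa using h⟩
  | @insert a s _ _ ih =>
    rw [image_insert_eq] at hx
    obtain ⟨l, hl, hlx⟩ := ih f fun h => hx (Submodule.span_mono (subset_insert _ _) h)
    obtain hla | hla := le_or_gt 0 (l (f a))
    · exact ⟨l, forall_mem_insert.2 ⟨hla, hl⟩, hlx⟩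
    -- Otherwise project along `f a` onto the kernel of `l`.
    let π : V →ₗ[K] V := LinearMap.id - (l.smulRight ((l (f a))⁻¹ • f a))
    have hπ (y : V) : π y = y - (l y / l (f a)) • f a := by
      simp [π, smul_smul, div_eq_mul_inv]
    have hπx : π x ∉ PointedCone.hull K ((π ∘ f) '' s) := by
      rw [image_comp, ← map_hull, PointedCone.mem_map]
      rintro ⟨z, hz, hzx⟩
      rw [hπ, hπ] at hzx
      have hlz : 0 ≤ l z := dual_nonneg_of_mem_hull (forall_mem_image.2 hl) hz
      refine hx (mem_hull_insert.2 ⟨(l x - l z) / l (f a), ?_, ?_⟩)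
      · exact div_nonneg_of_nonpos (by linarith) hla.le
      · rwa [sub_div, sub_smul, sub_sub_eq_add_sub, add_sub_right_comm, ← hzx, sub_add_cancel]
    obtain ⟨l', hl', hlx'⟩ := ih (π ∘ f) hπx
    refine ⟨l' ∘ₗ π, forall_mem_insert.2 ⟨?_, hl'⟩, hlx'⟩
    simp [hπ, hla.ne]

end Farkas

section IntegralPoints

lemma mem_hull_of_comp_mem_hull {K L ι : Type*} [Field K] [LinearOrder K] [IsStrictOrderedRing K]
    [Field L] [LinearOrder L] [IsStrictOrderedRing L] [Finite ι] {σ : K →+* L}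
    (hσ : StrictMono σ) {s : Set (ι → K)} {v : ι → K}
    (hv : σ ∘ v ∈ PointedCone.hull L ((σ ∘ ·) '' s)) : v ∈ PointedCone.hull K s := by
  classical
  cases nonempty_fintype ι
  obtain ⟨t', ht', hvt⟩ := Submodule.mem_span_finite_of_mem_span hv
  obtain ⟨t, hts, rfl⟩ := Finset.subset_set_image_iff.1 ht'
  rw [Finset.coe_image] at hvt
  refine Submodule.span_mono hts ?_
  by_contra hvK
  rw [← image_id (t : Set (ι → K))] at hvK
  obtain ⟨l, hl, hlv⟩ := exists_dual_neg_of_notMem_hull t.finite_toSet id hvK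
  obtain ⟨c, rfl⟩ := (dotProductEquiv K ι).surjective l
  have hσc (u : ι → K) : dotProductEquiv L ι (σ ∘ c) (σ ∘ u) = σ (dotProductEquiv K ι c u) :=
    (RingHom.map_dotProduct σ c u).symm
  have hnonneg : 0 ≤ dotProductEquiv L ι (σ ∘ c) (σ ∘ v) :=
    dual_nonneg_of_mem_hull
      (forall_mem_image.2 fun u hu => by simpa [hσc] using hσ.monotone (hl u hu)) hvt
  rw [hσc, ← map_zero σ, hσ.le_iff_le] at hnonneg
  exact hnonneg.not_gt hlv

lemma exists_nsmul_eq_of_mem_hull {G V : Type*} [AddCommMonoid G] [AddCommGroup V] [Module ℚ V]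
    (φ : G →+ V) {M : AddSubmonoid G} {x : V} (hx : x ∈ PointedCone.hull ℚ (φ '' M)) :
    ∃ N : ℕ, N ≠ 0 ∧ ∃ m ∈ M, N • x = φ m := by
  induction hx using Submodule.span_induction with
  | mem y hy =>
    obtain ⟨m, hm, rfl⟩ := hy
    exact ⟨1, one_ne_zero, m, hm, one_smul _ _⟩
  | zero => exact ⟨1, one_ne_zero, 0, zero_mem M, by simp⟩
  | add y z _ _ hy hz =>
    obtain ⟨N, hN, m, hm, hNy⟩ := hy
    obtain ⟨N', hN', m', hm', hNz⟩ := hz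
    refine ⟨N' * N, mul_ne_zero hN' hN, N' • m + N • m',
      add_mem (nsmul_mem hm _) (nsmul_mem hm' _), ?_⟩
    rw [smul_add, mul_smul, hNy, mul_comm, mul_smul, hNz, map_add, map_nsmul, map_nsmul]
  | smul r y _ hy =>
    obtain ⟨N, hN, m, hm, hNy⟩ := hy
    obtain ⟨q, hq⟩ := r
    refine ⟨q.den * N, mul_ne_zero q.den_nz hN, q.num.toNat • m, nsmul_mem hm _, ?_⟩
    have hnum : (q.num.toNat : ℚ) = q.den * q := by
      rw [Rat.den_mul_eq_num]
      exact_mod_cast Int.toNat_of_nonneg (Rat.num_nonneg.2 hq)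
    calc (q.den * N) • q • y = (q.den * q : ℚ) • N • y := by
          simp only [← Nat.cast_smul_eq_nsmul ℚ, smul_smul]
          push_cast
          ring_nf
      _ = φ (q.num.toNat • m) := by
          rw [← hnum, hNy, Nat.cast_smul_eq_nsmul, map_nsmul]

variable {d : ℕ} {M : AddSubmonoid (Fin d → ℤ)} {v : Fin d → ℤ}

lemma exists_nsmul_mem_of_coeR_mem_hull (hv : coeR v ∈ PointedCone.hull ℝ (coeR '' M)) :
    ∃ N : ℕ, N ≠ 0 ∧ N • v ∈ M := by
  let φ : (Fin d → ℤ) →+ (Fin d → ℚ) := (Int.castAddHom ℚ).compLeft (Fin d)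
  have hφ (x : Fin d → ℤ) : coeR x = Rat.castHom ℝ ∘ φ x := by
    ext i
    simp [coeR, φ]
  have hvQ : φ v ∈ PointedCone.hull ℚ (φ '' M) := by
    apply mem_hull_of_comp_mem_hull (σ := Rat.castHom ℝ) Rat.cast_strictMono
    rw [image_image]
    simpa only [hφ] using hv
  obtain ⟨N, hN, m, hm, hNv⟩ := exists_nsmul_eq_of_mem_hull φ hvQ
  have hφinj : Function.Injective φ := Int.cast_injective.comp_left
  rw [← map_nsmul] at hNv
  exact ⟨N, hN, hφinj hNv ▸ hm⟩

lemma mem_of_coeR_mem_hull_of_neg_mem (hv : coeR v ∈ PointedCone.hull ℝ (coeR '' M))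
    (hn : -v ∈ M) : v ∈ M := by
  obtain ⟨N, hN, hNv⟩ := exists_nsmul_mem_of_coeR_mem_hull hv
  obtain ⟨k, rfl⟩ := Nat.exists_eq_succ_of_ne_zero hN
  have hsum : v = (k + 1) • v + k • -v := by
    rw [succ_nsmul, smul_neg]
    abel
  exact hsum ▸ add_mem hNv (nsmul_mem hn k)

end IntegralPoints

section Cones

variable {𝕜 E : Type*} [Field 𝕜] [LinearOrder 𝕜] [IsStrictOrderedRing 𝕜]
  [AddCommGroup E] [Module 𝕜 E] {s P F : Set E} {p v x : E}

lemma hull_convexHull (s : Set E) :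
    PointedCone.hull 𝕜 (convexHull 𝕜 s) = PointedCone.hull 𝕜 s :=
  le_antisymm
    (Submodule.span_le.2 (convexHull_min PointedCone.subset_hull (PointedCone.convex _)))
    (Submodule.span_mono (subset_convexHull 𝕜 s))

lemma exists_smul_eq_of_mem_hull (hs : Convex 𝕜 s) (hne : s.Nonempty)
    (hx : x ∈ PointedCone.hull 𝕜 s) : ∃ r : 𝕜, 0 ≤ r ∧ ∃ y ∈ s, r • y = x := by
  induction hx using Submodule.span_induction with
  | mem y hy => exact ⟨1, zero_le_one, y, hy, one_smul 𝕜 y⟩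
  | zero => exact ⟨0, le_rfl, hne.some, hne.some_mem, zero_smul 𝕜 _⟩
  | add _ _ _ _ hy hz =>
    obtain ⟨p, hp, y, hy, rfl⟩ := hy
    obtain ⟨q, hq, z, hz, rfl⟩ := hz
    exact ⟨p + q, add_nonneg hp hq, hs.exists_mem_add_smul_eq hy hz hp hq⟩
  | smul c _ _ hy =>
    obtain ⟨p, hp, y, hy, rfl⟩ := hy
    exact ⟨c * p, mul_nonneg c.2 hp, y, hy, mul_smul c.1 p y⟩

lemma convexHull_addSubmonoid [Archimedean 𝕜] (N : AddSubmonoid E) :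
    convexHull 𝕜 (N : Set E) = PointedCone.hull 𝕜 (N : Set E) := by
  refine (convexHull_min PointedCone.subset_hull (PointedCone.convex _)).antisymm fun x hx => ?_
  let C : AddSubmonoid E :=
    { carrier := convexHull 𝕜 (N : Set E)
      zero_mem' := subset_convexHull 𝕜 _ N.zero_mem
      add_mem' := fun ha hb =>
        convexHull_mono (add_subset_iff.2 fun _ hm _ hn => N.add_mem hm hn)
          (convexHull_add (R := 𝕜) (N : Set E) N ▸ add_mem_add ha hb) }
  rw [SetLike.mem_coe, ← hull_convexHull] at hx
  obtain ⟨r, hr, y, hy, rfl⟩ :=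
    exists_smul_eq_of_mem_hull (convex_convexHull 𝕜 _) ⟨0, C.zero_mem⟩ hx
  obtain ⟨n, hn⟩ := exists_nat_gt r
  have hn0 : (0 : 𝕜) < n := hr.trans_lt hn
  have hrn : r • y = (r / n) • (n • y) := by
    rw [← Nat.cast_smul_eq_nsmul 𝕜, smul_smul, div_mul_cancel₀ _ hn0.ne']
  rw [hrn]
  exact (convex_convexHull 𝕜 (N : Set E)).smul_mem_of_zero_mem C.zero_mem (C.nsmul_mem hy n)
    ⟨div_nonneg hr hn0.le, (div_le_one hn0).2 hn.le⟩

lemma hull_addSubmonoid_closure (s : Set E) :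
    PointedCone.hull 𝕜 (AddSubmonoid.closure s : Set E) = PointedCone.hull 𝕜 s :=
  Submodule.span_closure

variable (𝕜) in
/-- The cone of directions pointing into `P` from `F`, generated by the differences `p - v` with
`p ∈ P` and `v ∈ F`. -/
def feasibleCone (P F : Set E) : PointedCone 𝕜 E :=
  PointedCone.hull 𝕜 (P - F)

lemma sub_mem_feasibleCone (hp : p ∈ P) (hv : v ∈ F) : p - v ∈ feasibleCone 𝕜 P F :=
  PointedCone.subset_hull (sub_mem_sub hp hv)

lemma feasibleCone_convexHull (s t : Set E) :
    feasibleCone 𝕜 (convexHull 𝕜 s) (convexHull 𝕜 t) = feasibleCone 𝕜 s t := by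
  rw [feasibleCone, ← convexHull_sub, hull_convexHull, feasibleCone]

lemma feasibleCone_convexHull_left (s t : Set E) :
    feasibleCone 𝕜 (convexHull 𝕜 s) t = feasibleCone 𝕜 s t := by
  rw [← feasibleCone_convexHull, convexHull_eq_self.2 (convex_convexHull 𝕜 s),
    feasibleCone_convexHull]

end Cones

section Faces

variable {𝕜 E : Type*} [Field 𝕜] [LinearOrder 𝕜] [IsStrictOrderedRing 𝕜]
  [AddCommGroup E] [Module 𝕜 E] {s P F F₁ F₂ S : Set E} {p v : E}

lemma mem_of_sub_mem_feasibleCone (hF : IsExtreme 𝕜 P F) (hFc : Convex 𝕜 F) (hPc : Convex 𝕜 P)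
    (hv : v ∈ F) (hp : p ∈ P) (h : v - p ∈ feasibleCone 𝕜 P F) : p ∈ F := by
  obtain ⟨r, hr, _, ⟨u, hu, w, hw, rfl⟩, hvp⟩ :=
    exists_smul_eq_of_mem_hull (hPc.sub hFc) ⟨_, sub_mem_sub hp hv⟩ h
  obtain rfl | hr := hr.eq_or_lt
  · rw [zero_smul, eq_comm, sub_eq_zero] at hvp
    exact hvp ▸ hv
  obtain ⟨z, hz, hrz⟩ := hFc.exists_mem_add_smul_eq hv hw zero_le_one hr.le
  refine hF.left_mem_of_mem_openSegment hp hu hz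
    (mem_openSegment_iff_div.2 ⟨1, r, one_pos, hr, ?_⟩)
  have h1r : 1 + r ≠ 0 := (add_pos one_pos hr).ne'
  have hpu : (1 + r) • z = (1 : 𝕜) • p + r • u := by
    linear_combination (norm := module) hrz - hvp
  rw [← inv_smul_smul₀ h1r z, hpu, smul_add, smul_smul, smul_smul, div_eq_inv_mul, div_eq_inv_mul]

lemma subset_of_feasibleCone_le (hF : IsExtreme 𝕜 P F₁) (hF₁ : Convex 𝕜 F₁) (hPc : Convex 𝕜 P)
    (hne : F₁.Nonempty) (hF₂ : F₂ ⊆ P) (h : feasibleCone 𝕜 P F₂ ≤ feasibleCone 𝕜 P F₁) :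
    F₂ ⊆ F₁ := fun _ hp =>
  have ⟨_, hv⟩ := hne
  mem_of_sub_mem_feasibleCone hF hF₁ hPc hv (hF₂ hp)
    (h (sub_mem_feasibleCone (hF.subset hv) hp))

variable (𝕜) in
/-- The smallest face of a convex set `P` containing the subset `S` of `P`: the points of `P` from
which every point of `S` lies in a direction of the cone generated by `P - S`. -/
def minimalFace (P S : Set E) : Set E :=
  {p ∈ P | ∀ s ∈ S, s - p ∈ feasibleCone 𝕜 P S}

lemma minimalFace_subset : minimalFace 𝕜 P S ⊆ P :=
  sep_subset _ _

lemma subset_minimalFace (h : S ⊆ P) : S ⊆ minimalFace 𝕜 P S := fun _ hp =>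
  ⟨h hp, fun _ hs => sub_mem_feasibleCone (h hs) hp⟩

lemma convex_minimalFace (hP : Convex 𝕜 P) : Convex 𝕜 (minimalFace 𝕜 P S) := by
  rintro p ⟨hp, hpS⟩ q ⟨hq, hqS⟩ a b ha hb hab
  refine ⟨hP hp hq ha hb hab, fun s hs => ?_⟩
  rw [← Convex.combo_self hab s, add_sub_add_comm, ← smul_sub, ← smul_sub]
  exact PointedCone.convex _ (hpS s hs) (hqS s hs) ha hb hab

lemma isExtreme_minimalFace : IsExtreme 𝕜 P (minimalFace 𝕜 P S) := by
  refine ⟨minimalFace_subset, ?_⟩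
  rintro x hx y hy z ⟨-, hzS⟩ ⟨a, b, ha, hb, hab, rfl⟩
  refine ⟨hx, fun s hs => ?_⟩
  have hsum : a • (s - x) = s - (a • x + b • y) + b • (y - s) := by
    obtain rfl : b = 1 - a := eq_sub_of_add_eq' hab
    module
  rw [← inv_smul_smul₀ ha.ne' (s - x), hsum]
  exact PointedCone.smul_mem _ (inv_nonneg.2 ha.le)
    (add_mem (hzS s hs) (PointedCone.smul_mem _ hb.le (sub_mem_feasibleCone hy hs)))

lemma feasibleCone_minimalFace (hS : S ⊆ P) (hne : S.Nonempty) :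
    feasibleCone 𝕜 P (minimalFace 𝕜 P S) = feasibleCone 𝕜 P S := by
  refine (Submodule.span_le.2 (sub_subset_iff.2 fun u hu p hp => ?_)).antisymm
    (Submodule.span_mono (sub_subset_sub_left (subset_minimalFace hS)))
  obtain ⟨s, hs⟩ := hne
  rw [← sub_add_sub_cancel u s p]
  exact add_mem (sub_mem_feasibleCone hu hs) (hp.2 s hs)

lemma convexHull_inter_eq_of_isExtreme (hF : IsExtreme 𝕜 (convexHull 𝕜 s) F)
    (hFc : Convex 𝕜 F) : convexHull 𝕜 (s ∩ F) = F := by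
  refine (convexHull_min inter_subset_right hFc).antisymm fun x hx => ?_
  have hdiff : convexHull 𝕜 (s \ F) ⊆ convexHull 𝕜 s \ F :=
    convexHull_min (sdiff_subset_sdiff_left (subset_convexHull 𝕜 s))
      (hF.convex_sdiff (convex_convexHull 𝕜 s))
  have hxs := hF.subset hx
  rw [← inter_union_sdiff s F] at hxs
  obtain h | h := (s ∩ F).eq_empty_or_nonempty
  · rw [h, empty_union] at hxs
    exact absurd hx (hdiff hxs).2
  obtain h' | h' := (s \ F).eq_empty_or_nonempty
  · rwa [h', union_empty] at hxs
  rw [convexHull_union h h'] at hxs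
  obtain ⟨p, hp, q, hq, hpq⟩ := mem_convexJoin.1 hxs
  rw [← insert_endpoints_openSegment] at hpq
  rcases hpq with rfl | rfl | hpq
  · exact hp
  · exact absurd hx (hdiff hq).2
  · exact absurd (hF.right_mem_of_mem_openSegment (convexHull_mono inter_subset_left hp)
      (hdiff hq).1 hx hpq) (hdiff hq).2

end Faces

section Minkowski

variable {E : Type*} [AddCommGroup E] [Module ℝ E] [TopologicalSpace E] [T2Space E]
  [IsTopologicalAddGroup E] [ContinuousSMul ℝ E] [LocallyConvexSpace ℝ E] {s F : Set E}

lemma convexHull_extremePoints_of_isExtreme (hs : s.Finite)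
    (hF : IsExtreme ℝ (convexHull ℝ s) F) (hFc : Convex ℝ F) :
    convexHull ℝ (F.extremePoints ℝ) = F := by
  have hext : (F.extremePoints ℝ).Finite :=
    hs.subset (hF.extremePoints_subset_extremePoints.trans extremePoints_convexHull_subset)
  have hcompact : IsCompact F :=
    convexHull_inter_eq_of_isExtreme hF hFc ▸ (hs.inter_of_left F).isCompact_convexHull ℝ
  rw [← hext.isClosed_convexHull ℝ |>.closure_eq, closure_convexHull_extremePoints hcompact hFc]

end Minkowski

section Translates

variable {G : Type*} [AddCommGroup G] {M N : AddSubmonoid G} {x : G}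

lemma vadd_coe_eq_self (hx : x ∈ M) (hnx : -x ∈ M) : x +ᵥ (M : Set G) = M := by
  refine (vadd_set_subset_iff.2 fun y hy => M.add_mem hx hy).antisymm fun y hy => ?_
  exact mem_vadd_set_iff_neg_vadd_mem.2 (M.add_mem hnx hy)

lemma eq_of_coe_eq_vadd (h : (M : Set G) = x +ᵥ (N : Set G)) : M = N := by
  have hnx : -x ∈ N := by
    have h0 : (0 : G) ∈ x +ᵥ (N : Set G) := h ▸ M.zero_mem
    simpa [mem_vadd_set_iff_neg_vadd_mem] using h0
  have hx : x ∈ N := by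
    have hxM : x ∈ (M : Set G) := h ▸ ⟨0, N.zero_mem, add_zero x⟩
    have hxx : x + x ∈ x +ᵥ (N : Set G) := h ▸ M.add_mem hxM hxM
    simpa [mem_vadd_set_iff_neg_vadd_mem] using hxx
  exact SetLike.coe_injective (h.trans (vadd_coe_eq_self hx hnx))

end Translates

section DiffMonoid

variable {V : Type*} [AddCommGroup V] {A S : Set V}

/-- The submonoid generated by the differences `u - v` with `u ∈ A` and `v ∈ S`; it is `H_F` when
`S = Ext(F)`. -/
def diffMonoid (A S : Set V) : AddSubmonoid V :=
  AddSubmonoid.closure (A - S)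

lemma sub_mem_diffMonoid {u v : V} (hu : u ∈ A) (hv : v ∈ S) : u - v ∈ diffMonoid A S :=
  AddSubmonoid.subset_closure (sub_mem_sub hu hv)

lemma addSubgroup_closure_sub_eq_top (h0 : 0 ∈ A)
    (hA : ∀ g, ∃ n : ℕ, g ∈ n • A) : AddSubgroup.closure (A - A) = ⊤ := by
  refine eq_top_iff.2 fun g _ => ?_
  have hsub : A ⊆ AddSubgroup.closure (A - A) := fun a ha =>
    AddSubgroup.subset_closure ⟨a, ha, 0, h0, sub_zero a⟩
  obtain ⟨n, hn⟩ := hA g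
  exact AddSubmonoid.nsmul_subset (S := (AddSubgroup.closure (A - A)).toAddSubmonoid) hsub hn

lemma diffMonoid_self_eq_top (hA : AddSubgroup.closure (A - A) = ⊤) : diffMonoid A A = ⊤ := by
  rw [← AddSubgroup.top_toAddSubmonoid, ← hA, AddSubgroup.closure_toAddSubmonoid, neg_sub,
    union_self, diffMonoid]

lemma hull_image_diffMonoid {𝕜 E : Type*} [Field 𝕜] [LinearOrder 𝕜] [IsStrictOrderedRing 𝕜]
    [AddCommGroup E] [Module 𝕜 E] (φ : V →+ E) (A S : Set V) :
    PointedCone.hull 𝕜 (φ '' diffMonoid A S) = feasibleCone 𝕜 (φ '' A) (φ '' S) := by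
  rw [← AddSubmonoid.coe_map, diffMonoid, AddMonoidHom.map_mclosure, hull_addSubmonoid_closure,
    image_sub, feasibleCone]

end DiffMonoid

namespace IsProperFace

variable {d : ℕ} {P F : Set (Fin d → ℝ)}

lemma nonempty (hF : IsProperFace P F) : F.Nonempty := hF.1

lemma ne (hF : IsProperFace P F) : F ≠ P := hF.2.1

lemma convex (hF : IsProperFace P F) : Convex ℝ F := hF.2.2.1

lemma isExtreme (hF : IsProperFace P F) : IsExtreme ℝ P F := hF.2.2.2

end IsProperFace

section LatticeFaces

variable {d : ℕ} {A S T : Set (Fin d → ℤ)} {F F₁ F₂ : Set (Fin d → ℝ)} {v : Fin d → ℤ}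

/-- The embedding `coeR : ℤ^d → ℝ^d` as a homomorphism. -/
def coeRHom (d : ℕ) : (Fin d → ℤ) →+ (Fin d → ℝ) :=
  (Int.castAddHom ℝ).compLeft (Fin d)

lemma coe_coeRHom : ⇑(coeRHom d) = coeR := rfl

lemma coeR_injective : Function.Injective (coeR (d := d)) :=
  Int.cast_injective.comp_left

lemma coeR_sub (x y : Fin d → ℤ) : coeR (x - y) = coeR x - coeR y :=
  map_sub (coeRHom d) x y

lemma coeR_image_vadd (v : Fin d → ℤ) (H : Set (Fin d → ℤ)) :
    coeR '' (v +ᵥ H) = coeR v +ᵥ coeR '' H :=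
  image_vadd_distrib (coeRHom d) v H

lemma hull_coeR_image_diffMonoid (A S : Set (Fin d → ℤ)) :
    PointedCone.hull ℝ (coeR '' diffMonoid A S) = feasibleCone ℝ (coeR '' A) (coeR '' S) :=
  hull_image_diffMonoid (coeRHom d) A S

lemma diffMonoid_le_of_feasibleCone_le (hS : S ⊆ A) (hT : T ⊆ A) (hne : S.Nonempty)
    (h : feasibleCone ℝ (coeR '' A) (coeR '' T) ≤ feasibleCone ℝ (coeR '' A) (coeR '' S)) :
    diffMonoid A T ≤ diffMonoid A S := by
  obtain ⟨s, hs⟩ := hne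
  refine AddSubmonoid.closure_le.2 (sub_subset_iff.2 fun u hu t ht => ?_)
  have hcone : coeR (s - t) ∈ feasibleCone ℝ (coeR '' A) (coeR '' S) :=
    h (coeR_sub s t ▸ sub_mem_feasibleCone (mem_image_of_mem _ (hS hs)) (mem_image_of_mem _ ht))
  have hst : s - t ∈ diffMonoid A S := by
    refine mem_of_coeR_mem_hull_of_neg_mem ?_ ((neg_sub s t).symm ▸ sub_mem_diffMonoid (hT ht) hs)
    rwa [hull_coeR_image_diffMonoid]
  rw [← sub_add_sub_cancel u s t]
  exact add_mem (sub_mem_diffMonoid hu hs) hst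

lemma diffMonoid_eq_of_feasibleCone_eq (hS : S ⊆ A) (hT : T ⊆ A) (hSne : S.Nonempty)
    (hTne : T.Nonempty)
    (h : feasibleCone ℝ (coeR '' A) (coeR '' S) = feasibleCone ℝ (coeR '' A) (coeR '' T)) :
    diffMonoid A S = diffMonoid A T :=
  (diffMonoid_le_of_feasibleCone_le hT hS hTne h.le).antisymm
    (diffMonoid_le_of_feasibleCone_le hS hT hSne h.ge)

lemma HF_eq_diffMonoid (A : Set (Fin d → ℤ)) (F : Set (Fin d → ℝ)) :
    HF A F = diffMonoid A (ExtZ F) := by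
  have hgen : {x | ∃ u ∈ A, ∃ v ∈ ExtZ F, x = u - v} = A - ExtZ F := by
    simp only [← image2_sub, image2, eq_comm]
  rw [HF, hgen, diffMonoid]

lemma coeR_image_ExtZ (hF : IsExtreme ℝ (convexHull ℝ (coeR '' A)) F) :
    coeR '' ExtZ F = F.extremePoints ℝ :=
  image_preimage_eq_of_subset <|
    (hF.extremePoints_subset_extremePoints.trans extremePoints_convexHull_subset).trans
      (image_subset_range _ _)

lemma ExtZ_subset (hF : IsExtreme ℝ (convexHull ℝ (coeR '' A)) F) : ExtZ F ⊆ A := by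
  rw [← image_subset_image_iff coeR_injective, coeR_image_ExtZ hF]
  exact hF.extremePoints_subset_extremePoints.trans extremePoints_convexHull_subset

lemma convexHull_coeR_image_ExtZ (hA : A.Finite) (hF : IsExtreme ℝ (convexHull ℝ (coeR '' A)) F)
    (hFc : Convex ℝ F) : convexHull ℝ (coeR '' ExtZ F) = F := by
  rw [coeR_image_ExtZ hF, convexHull_extremePoints_of_isExtreme (hA.image _) hF hFc]

lemma ExtZ_nonempty (hA : A.Finite) (hF : IsProperFace (convexHull ℝ (coeR '' A)) F) :
    (ExtZ F).Nonempty := by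
  have hne := hF.nonempty
  rwa [← convexHull_coeR_image_ExtZ hA hF.isExtreme hF.convex, convexHull_nonempty_iff,
    image_nonempty] at hne

lemma feasibleCone_coeR_image_ExtZ (hA : A.Finite)
    (hF : IsExtreme ℝ (convexHull ℝ (coeR '' A)) F) (hFc : Convex ℝ F) :
    feasibleCone ℝ (coeR '' A) (coeR '' ExtZ F) = feasibleCone ℝ (convexHull ℝ (coeR '' A)) F := by
  rw [← feasibleCone_convexHull, convexHull_coeR_image_ExtZ hA hF hFc]

lemma hull_coeR_image_HF (hA : A.Finite) (hF : IsProperFace (convexHull ℝ (coeR '' A)) F) :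
    PointedCone.hull ℝ (coeR '' HF A F) = feasibleCone ℝ (convexHull ℝ (coeR '' A)) F := by
  rw [HF_eq_diffMonoid, hull_coeR_image_diffMonoid,
    feasibleCone_coeR_image_ExtZ hA hF.isExtreme hF.convex]

lemma convexHull_coeR_image_HF (hA : A.Finite) (hF : IsProperFace (convexHull ℝ (coeR '' A)) F) :
    convexHull ℝ (coeR '' HF A F) = feasibleCone ℝ (convexHull ℝ (coeR '' A)) F := by
  rw [← hull_coeR_image_HF hA hF, HF_eq_diffMonoid, ← coe_coeRHom, ← AddSubmonoid.coe_map,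
    convexHull_addSubmonoid]

lemma diffMonoid_eq_top_or_exists_HF_eq (hA : A.Finite) (hgen : AddSubgroup.closure (A - A) = ⊤)
    (hS : S ⊆ A) (hne : S.Nonempty) :
    diffMonoid A S = ⊤ ∨
      ∃ F, IsProperFace (convexHull ℝ (coeR '' A)) F ∧ HF A F = diffMonoid A S := by
  have hSP : coeR '' S ⊆ convexHull ℝ (coeR '' A) :=
    (image_mono hS).trans (subset_convexHull ℝ _)
  set P := convexHull ℝ (coeR '' A)
  set F := minimalFace ℝ P (coeR '' S)
  have hFc : Convex ℝ F := convex_minimalFace (convex_convexHull ℝ _)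
  have hFe : IsExtreme ℝ P F := isExtreme_minimalFace
  have hFS : feasibleCone ℝ P F = feasibleCone ℝ (coeR '' A) (coeR '' S) := by
    rw [feasibleCone_minimalFace hSP (hne.image _), feasibleCone_convexHull_left]
  have hFne : F.Nonempty := (hne.image _).mono (subset_minimalFace hSP)
  by_cases hFP : F = P
  · left
    rw [← diffMonoid_self_eq_top hgen]
    refine diffMonoid_eq_of_feasibleCone_eq hS Subset.rfl hne (hne.mono hS) ?_
    rw [← hFS, hFP, feasibleCone_convexHull]
  · have hF : IsProperFace P F := ⟨hFne, hFP, hFc, hFe⟩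
    refine .inr ⟨F, hF, ?_⟩
    rw [HF_eq_diffMonoid, diffMonoid_eq_of_feasibleCone_eq (ExtZ_subset hFe) hS
      (ExtZ_nonempty hA hF) hne ((feasibleCone_coeR_image_ExtZ hA hFe hFc).trans hFS)]

lemma eq_of_feasibleCone_eq {P : Set (Fin d → ℝ)} (hP : Convex ℝ P) (h₁ : IsProperFace P F₁)
    (h₂ : IsProperFace P F₂) (h : feasibleCone ℝ P F₁ = feasibleCone ℝ P F₂) : F₁ = F₂ := by
  apply Subset.antisymm
  · exact subset_of_feasibleCone_le h₂.isExtreme h₂.convex hP h₂.nonempty h₁.isExtreme.subset h.le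
  · exact subset_of_feasibleCone_le h₁.isExtreme h₁.convex hP h₁.nonempty h₂.isExtreme.subset h.ge

lemma eq_of_HF_eq_vadd_HF (hA : A.Finite) (h₁ : IsProperFace (convexHull ℝ (coeR '' A)) F₁)
    (h₂ : IsProperFace (convexHull ℝ (coeR '' A)) F₂) (h : HF A F₁ = v +ᵥ HF A F₂) : F₁ = F₂ := by
  rw [HF_eq_diffMonoid, HF_eq_diffMonoid] at h
  apply eq_of_feasibleCone_eq (convex_convexHull ℝ _) h₁ h₂
  rw [← hull_coeR_image_HF hA h₁, ← hull_coeR_image_HF hA h₂, HF_eq_diffMonoid, HF_eq_diffMonoid,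
    eq_of_coe_eq_vadd h]

lemma HF_ne_univ (hA : A.Finite) (hF : IsProperFace (convexHull ℝ (coeR '' A)) F) :
    HF A F ≠ univ := by
  intro h
  set P := convexHull ℝ (coeR '' A)
  refine hF.ne (hF.isExtreme.subset.antisymm (subset_of_feasibleCone_le hF.isExtreme hF.convex
    (convex_convexHull ℝ _) hF.nonempty Subset.rfl ?_))
  rw [← hull_coeR_image_HF hA hF, h, feasibleCone_convexHull, ← hull_coeR_image_diffMonoid]
  exact Submodule.span_mono (image_mono (subset_univ _))

end LatticeFaces

namespace ConvergesTo

variable {α : Type*} {s : ℕ → Set α} {S S' : Set α}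

lemma unique (h : ConvergesTo s S) (h' : ConvergesTo s S') : S = S' := by
  ext a
  obtain ⟨i, hi, hi'⟩ := ((h a).and (h' a)).exists
  exact hi.symm.trans hi'

lemma comp_tendsto (h : ConvergesTo s S) {φ : ℕ → ℕ} (hφ : Tendsto φ atTop atTop) :
    ConvergesTo (fun i => s (φ i)) S :=
  fun a => hφ.eventually (h a)

lemma of_monotone (hs : Monotone s) : ConvergesTo s (⋃ i, s i) := by
  intro a
  by_cases ha : a ∈ ⋃ i, s i
  · obtain ⟨i, hi⟩ := mem_iUnion.1 ha
    filter_upwards [eventually_ge_atTop i] with j hj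
    exact iff_of_true (hs hj hi) ha
  · exact .of_forall fun i => iff_of_false (fun hi => ha (mem_iUnion_of_mem i hi)) ha

end ConvergesTo

lemma exists_subseq_tendsto_atTop_or_const {ι : Type*} (B : Finset ι) (c : ℕ → ι → ℕ) :
    ∃ φ : ℕ → ℕ, StrictMono φ ∧ ∃ T ⊆ B, ∃ k : ι → ℕ,
      (∀ a ∈ T, Monotone (fun i => c (φ i) a) ∧ Tendsto (fun i => c (φ i) a) atTop atTop) ∧
        ∀ a ∈ B, a ∉ T → ∀ i, c (φ i) a = k a := by
  classical
  -- Dickson's lemma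
  obtain ⟨g, hg⟩ := (wellQuasiOrdered_le (α := B → ℕ)).exists_monotone_subseq fun i a => c i a
  have hmono : ∀ a ∈ B, Monotone fun i => c (g i) a := fun a ha i j hij => hg i j hij ⟨a, ha⟩
  have hlim : ∀ a ∈ B, ∃ k, Tendsto (fun i => c (g i) a) atTop atTop ∨
      ∀ᶠ i in atTop, c (g i) a = k := fun a ha => by
    rcases tendsto_atTop_of_monotone (hmono a ha) with h | ⟨k, h⟩
    · exact ⟨0, .inl h⟩
    · exact ⟨k, .inr (by simpa using h)⟩
  choose! k hk using hlim
  have hconst : ∀ᶠ i in atTop, ∀ a ∈ B, ¬ Tendsto (fun i => c (g i) a) atTop atTop →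
      c (g i) a = k a := by
    refine (Filter.eventually_all_finset B).2 fun a ha => ?_
    rcases hk a ha with h | h
    · exact .of_forall fun _ hn => absurd h hn
    · exact h.mono fun _ hi _ => hi
  obtain ⟨i₀, hi₀⟩ := eventually_atTop.1 hconst
  refine ⟨fun i => g (i + i₀), g.strictMono.comp (strictMono_id.add_const i₀),
    {a ∈ B | Tendsto (fun i => c (g i) a) atTop atTop}, Finset.filter_subset _ _, k, ?_, ?_⟩
  · intro a ha
    rw [Finset.mem_filter] at ha
    exact ⟨(hmono a ha.1).comp fun i j hij => Nat.add_le_add_right hij i₀,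
      ha.2.comp (tendsto_add_atTop_nat i₀)⟩
  · intro a ha haT i
    exact hi₀ _ (Nat.le_add_left i₀ i) a ha fun h => haT (Finset.mem_filter.2 ⟨ha, h⟩)

section Balls

variable {V : Type*} [AddCommGroup V] {A H S : Set V} {T : Finset V} {e : ℕ → V → ℕ}

lemma exists_weights_of_mem_nsmul {B : Finset V} {n : ℕ} {x : V} (hx : x ∈ n • (B : Set V)) :
    ∃ c : V → ℕ, ∑ a ∈ B, c a = n ∧ ∑ a ∈ B, c a • a = x := by
  classical
  obtain ⟨f, rfl⟩ := Set.mem_nsmul.1 hx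
  let m : Multiset V := List.ofFn fun i => (f i : V)
  have hm : ∀ a ∈ m, a ∈ B := by
    simp [m, List.mem_ofFn]
  refine ⟨fun a => m.count a, ?_, ?_⟩
  · rw [Multiset.sum_count_eq_card hm, Multiset.coe_card, List.length_ofFn]
  · rw [← Finset.sum_multiset_count_of_subset m B fun a ha => hm a (Multiset.mem_toFinset.1 ha),
      Multiset.sum_coe]

lemma sum_nsmul_sub_singleton (A : Set V) (T : Finset V) (c : V → ℕ) :
    ∑ a ∈ T, c a • (A - {a}) = (∑ a ∈ T, c a) • A - {∑ a ∈ T, c a • a} := by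
  simp only [nsmul_sub, Finset.sum_sub_distrib, nsmul_singleton, finsetSum_singleton,
    Finset.sum_nsmul_assoc]

lemma monotone_sum_nsmul_sub_singleton (hT : ↑T ⊆ A) (he : ∀ a ∈ T, Monotone fun i => e i a) :
    Monotone fun i => ∑ a ∈ T, e i a • (A - {a}) := fun _ _ hij =>
  finsetSum_subset_finsetSum _ _ _ fun a ha =>
    nsmul_subset_nsmul_right (zero_mem_sub_iff.2 (not_disjoint_iff.2 ⟨a, hT ha, rfl⟩))
      (he a ha hij)

lemma iUnion_sum_nsmul_sub_singleton (hT : ↑T ⊆ A)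
    (he : ∀ a ∈ T, Tendsto (fun i => e i a) atTop atTop) :
    ⋃ i, ∑ a ∈ T, e i a • (A - {a}) = diffMonoid A T := by
  classical
  have h0 : ∀ a ∈ T, (0 : V) ∈ A - {a} := fun a ha => ⟨a, hT ha, a, rfl, sub_self a⟩
  have h0sum : ∀ i, ∀ T' ⊆ T, (0 : V) ∈ ∑ a ∈ T', e i a • (A - {a}) := fun i T' hT' => by
    simpa only [Finset.sum_const_zero] using finsetSum_mem_finsetSum T' _ (fun _ => (0 : V))
      fun a ha => zero_mem_nsmul (n := e i a) (h0 a (hT' ha))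
  refine (iUnion_subset fun i => ?_).antisymm fun x hx => ?_
  · refine Finset.sum_induction _ (· ⊆ (diffMonoid A T : Set V)) (fun s t hs ht => ?_)
      (singleton_subset_iff.2 (zero_mem _)) fun a ha => AddSubmonoid.nsmul_subset ?_
    · exact (add_subset_add hs ht).trans (AddSubmonoid.coe_add_self_eq _).subset
    · exact (sub_subset_sub_left (singleton_subset_iff.2 ha)).trans AddSubmonoid.subset_closure
  · induction hx using AddSubmonoid.closure_induction with
    | mem x hx =>
      obtain ⟨u, hu, t, ht, rfl⟩ := hx
      obtain ⟨i, hi⟩ := ((he t ht).eventually_ne_atTop 0).exists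
      refine mem_iUnion_of_mem i ?_
      rw [← Finset.add_sum_erase T _ ht]
      exact subset_add_left _ (h0sum i _ (Finset.erase_subset t T))
        (subset_nsmul (h0 t ht) hi ⟨u, hu, t, rfl, rfl⟩)
    | zero => exact mem_iUnion_of_mem 0 (h0sum 0 T Subset.rfl)
    | add x y _ _ hx hy =>
      obtain ⟨i, hi⟩ := mem_iUnion.1 hx
      obtain ⟨j, hj⟩ := mem_iUnion.1 hy
      obtain ⟨k, hk⟩ : ∃ k, ∀ a ∈ T, e i a + e j a ≤ e k a :=
        ((Filter.eventually_all_finset T).2 fun a ha => (he a ha).eventually_ge_atTop _).exists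
      refine mem_iUnion_of_mem k (finsetSum_subset_finsetSum _ _ _ (fun a ha =>
        nsmul_subset_nsmul_right (h0 a ha) (hk a ha)) ?_)
      simp only [add_nsmul, Finset.sum_add_distrib]
      exact add_mem_add hi hj

lemma nsmul_add_diffMonoid {w : V} (hw : w ∈ S) (hwA : w ∈ A) (n : ℕ) :
    n • A + diffMonoid A S = {n • w} + (diffMonoid A S : Set V) := by
  induction n with
  | zero => simp
  | succ n ih =>
    have hA : A + (diffMonoid A S : Set V) = {w} + (diffMonoid A S : Set V) := by
      refine (add_subset_iff.2 fun a ha m hm => ?_).antisymm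
        (add_subset_add_right (singleton_subset_iff.2 hwA))
      have hwam : w + (a - w + m) = a + m := by rw [← add_assoc, add_sub_cancel]
      exact hwam ▸ add_mem_add rfl (add_mem (sub_mem_diffMonoid ha hw) hm)
    rw [succ_nsmul, succ_nsmul, add_assoc, hA, add_left_comm, ih, ← add_assoc,
      singleton_add_singleton, add_comm w]

lemma exists_convergesTo_diffMonoid (hST : S.Finite) (hS : S ⊆ A) (hne : S.Nonempty) :
    ∃ (g : ℕ → V) (n : ℕ → ℕ), Tendsto n atTop atTop ∧
      ConvergesTo (fun i => {g i} + n i • A) (diffMonoid A S) := by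
  lift S to Finset V using hST
  refine ⟨fun i => -∑ a ∈ S, i • a, fun i => ∑ _a ∈ S, i, ?_, ?_⟩
  · simp only [Finset.sum_const, smul_eq_mul]
    exact tendsto_id.const_mul_atTop' (Finset.card_pos.2 (Finset.coe_nonempty.1 hne))
  · have hball (i : ℕ) : {-∑ a ∈ S, i • a} + (∑ _a ∈ S, i) • A = ∑ a ∈ S, i • (A - {a}) := by
      rw [sum_nsmul_sub_singleton A S fun _ => i, sub_eq_add_neg, neg_singleton, add_comm]
    simp only [hball]
    rw [← iUnion_sum_nsmul_sub_singleton hS fun _ _ => tendsto_id]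
    exact .of_monotone (monotone_sum_nsmul_sub_singleton hS fun _ _ => monotone_id)

lemma singleton_add_nsmul_eq_add_sum [DecidableEq V] {B : Finset V} (hTB : T ⊆ B) (A : Set V)
    {c k : V → ℕ} (hk : ∀ a ∈ B, a ∉ T → c a = k a) (g : V) :
    {g} + (∑ a ∈ B, c a) • A = {g + ∑ a ∈ B, c a • a} +
      ((∑ a ∈ B \ T, k a) • A - {∑ a ∈ B \ T, k a • a} + ∑ a ∈ T, c a • (A - {a})) := by
  have hck : ∀ a ∈ B \ T, c a • (A - {a}) = k a • (A - {a}) := fun a ha => by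
    rw [hk a (Finset.mem_sdiff.1 ha).1 (Finset.mem_sdiff.1 ha).2]
  rw [← sum_nsmul_sub_singleton A (B \ T) k, ← Finset.sum_congr rfl hck, Finset.sum_sdiff hTB,
    sum_nsmul_sub_singleton, ← singleton_add_singleton, sub_eq_add_neg, neg_singleton,
    add_add_add_comm, singleton_add_singleton, add_neg_cancel, singleton_zero, add_zero]

lemma exists_weights_of_convergesTo {B : Finset V} {g : ℕ → V} {n : ℕ → ℕ}
    (hn : Tendsto n atTop atTop) (hH : ConvergesTo (fun i => {g i} + n i • (B : Set V)) H) {h : V}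
    (hh : h ∈ H) :
    ∃ (g' : ℕ → V) (c : ℕ → V → ℕ), (∀ i, g' i + ∑ a ∈ B, c i a • a = h) ∧
      Tendsto (fun i => ∑ a ∈ B, c i a) atTop atTop ∧
      ConvergesTo (fun i => {g' i} + (∑ a ∈ B, c i a) • (B : Set V)) H := by
  obtain ⟨N, hN⟩ := eventually_atTop.1 (hH h)
  have hweights (i : ℕ) : ∃ c : V → ℕ, ∑ a ∈ B, c a = n (i + N) ∧
      g (i + N) + ∑ a ∈ B, c a • a = h := by
    obtain ⟨_, rfl, x, hx, hgx⟩ := (hN (i + N) (Nat.le_add_left N i)).2 hh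
    obtain ⟨c, hc, rfl⟩ := exists_weights_of_mem_nsmul hx
    exact ⟨c, hc, hgx⟩
  choose c hcn hch using hweights
  refine ⟨fun i => g (i + N), c, hch, ?_, ?_⟩ <;> simp only [hcn]
  · exact hn.comp (tendsto_add_atTop_nat N)
  · exact hH.comp_tendsto (tendsto_add_atTop_nat N)

lemma exists_eq_singleton_add_nsmul_add_diffMonoid {B : Finset V} {g : ℕ → V} {c : ℕ → V → ℕ}
    {h : V} (hh : ∀ i, g i + ∑ a ∈ B, c i a • a = h)
    (hc : Tendsto (fun i => ∑ a ∈ B, c i a) atTop atTop)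
    (hH : ConvergesTo (fun i => {g i} + (∑ a ∈ B, c i a) • (B : Set V)) H) :
    ∃ S ⊆ (B : Set V), S.Nonempty ∧ ∃ (x : V) (n : ℕ),
      H = {x} + (n • (B : Set V) + (diffMonoid (B : Set V) S : Set V)) := by
  classical
  obtain ⟨φ, hφ, T, hTB, k, hT, hk⟩ := exists_subseq_tendsto_atTop_or_const B c
  have hTne : T.Nonempty := by
    rw [Finset.nonempty_iff_ne_empty]
    rintro rfl
    have hconst (i : ℕ) : ∑ a ∈ B, c (φ i) a = ∑ a ∈ B, k a :=
      Finset.sum_congr rfl fun a ha => hk a ha (Finset.notMem_empty a) i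
    exact not_tendsto_const_atTop _ _ ((hc.comp hφ.tendsto_atTop).congr hconst)
  have hTB' : (T : Set V) ⊆ B := Finset.coe_subset.2 hTB
  let R : Set V := (∑ a ∈ B \ T, k a) • (B : Set V) - {∑ a ∈ B \ T, k a • a}
  have hball (i : ℕ) : {g (φ i)} + (∑ a ∈ B, c (φ i) a) • (B : Set V) =
      {h} + (R + ∑ a ∈ T, c (φ i) a • ((B : Set V) - {a})) := by
    rw [singleton_add_nsmul_eq_add_sum hTB _ fun a ha haT => hk a ha haT i, hh]
  have hlim := ConvergesTo.of_monotone (((monotone_sum_nsmul_sub_singleton hTB'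
    fun a ha => (hT a ha).1).const_add R).const_add {h})
  rw [← add_iUnion, ← add_iUnion, iUnion_sum_nsmul_sub_singleton hTB' fun a ha => (hT a ha).2]
    at hlim
  refine ⟨T, hTB', hTne, h - ∑ a ∈ B \ T, k a • a, ∑ a ∈ B \ T, k a, ?_⟩
  calc H = {h} + (R + (diffMonoid (B : Set V) T : Set V)) := by
        refine (hH.comp_tendsto hφ.tendsto_atTop).unique ?_
        simpa only [hball] using hlim
    _ = _ := by
        rw [sub_eq_add_neg, ← singleton_add_singleton, ← neg_singleton]
        simp only [R, sub_eq_add_neg]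
        ac_rfl

lemma exists_eq_vadd_diffMonoid (hA : A.Finite) {g : ℕ → V} {n : ℕ → ℕ}
    (hn : Tendsto n atTop atTop) (hH : ConvergesTo (fun i => {g i} + n i • A) H)
    (hne : H.Nonempty) :
    ∃ S ⊆ A, S.Nonempty ∧ ∃ v : V, H = v +ᵥ (diffMonoid A S : Set V) := by
  lift A to Finset V using hA
  obtain ⟨h, hh⟩ := hne
  obtain ⟨g', c, hg', hc, hH'⟩ := exists_weights_of_convergesTo hn hH hh
  obtain ⟨S, hSA, ⟨w, hw⟩, x, m, rfl⟩ :=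
    exists_eq_singleton_add_nsmul_add_diffMonoid hg' hc hH'
  refine ⟨S, hSA, ⟨w, hw⟩, x + m • w, ?_⟩
  rw [nsmul_add_diffMonoid hw (hSA hw), ← add_assoc, singleton_add_singleton, singleton_add,
    ← image_vadd]
  rfl

end Balls

section FacetFunctionals

variable {K V : Type*} [Field K] [LinearOrder K] [IsStrictOrderedRing K] [AddCommGroup V]
  [Module K V] {G : Set V} {l q : Module.Dual K V} {x : V}

lemma exists_tilt (hG : G.Finite) (hl : ∀ g ∈ G, 0 ≤ l g) (hq : ∃ g ∈ G, q g < 0) :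
    ∃ t : K, (∀ g ∈ G, 0 ≤ (l + t • q) g) ∧ ∃ g ∈ G, q g < 0 ∧ (l + t • q) g = 0 := by
  obtain ⟨g₁, ⟨hg₁, hqg₁⟩, hmin⟩ := exists_min_image {g ∈ G | q g < 0} (fun g => l g / -q g)
    (hG.sep _) hq
  have ht : 0 ≤ l g₁ / -q g₁ := div_nonneg (hl g₁ hg₁) (neg_nonneg.2 hqg₁.le)
  refine ⟨l g₁ / -q g₁, fun g hg => ?_, g₁, hg₁, hqg₁, ?_⟩
  · rw [LinearMap.add_apply, LinearMap.smul_apply, smul_eq_mul]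
    rcases le_or_gt 0 (q g) with h | h
    · exact add_nonneg (hl g hg) (mul_nonneg ht h)
    · have hle := (le_div_iff₀ (neg_pos.2 h)).1 (hmin g ⟨hg, h⟩)
      linarith
  · rw [LinearMap.add_apply, LinearMap.smul_apply, smul_eq_mul, div_neg, neg_mul,
      div_mul_cancel₀ _ hqg₁.ne, add_neg_cancel]

lemma exists_dual_neg_of_not_ker_le (hG : Submodule.span K G = ⊤) (hx : l x ≠ 0)
    {Z : Submodule K V} (hZl : Z ≤ LinearMap.ker l) (hZ : ¬ LinearMap.ker l ≤ Z) :
    ∃ q : Module.Dual K V, q x = 0 ∧ Z ≤ LinearMap.ker q ∧ ∃ g ∈ G, q g < 0 := by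
  obtain ⟨y, hly, hyZ⟩ := SetLike.not_le_iff_exists.1 hZ
  obtain ⟨m, hmy, hmZ⟩ := Submodule.exists_le_ker_of_notMem hyZ
  let q := m - (m x / l x) • l
  have hqx : q x = 0 := by simp [q, div_mul_cancel₀ _ hx]
  have hqZ : Z ≤ LinearMap.ker q := fun z hz => by
    simp [q, LinearMap.mem_ker.1 (hmZ hz), LinearMap.mem_ker.1 (hZl hz)]
  have hqy : q y ≠ 0 := by simpa [q, LinearMap.mem_ker.1 hly] using hmy
  obtain ⟨g, hg, hqg⟩ : ∃ g ∈ G, q g ≠ 0 := by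
    by_contra! h
    exact hqy ((Submodule.span_le (p := LinearMap.ker q)).2 h (hG ▸ Submodule.mem_top))
  rcases hqg.lt_or_gt with h | h
  · exact ⟨q, hqx, hqZ, g, hg, h⟩
  · exact ⟨-q, by simp [hqx], fun z hz => by simpa using hqZ hz, g, hg, by simpa using h⟩

lemma exists_dual_ker_le_span_zeros (hG : G.Finite) (hspan : Submodule.span K G = ⊤)
    (hx : x ∉ PointedCone.hull K G) :
    ∃ l : Module.Dual K V, (∀ g ∈ G, 0 ≤ l g) ∧ l x < 0 ∧
      LinearMap.ker l ≤ Submodule.span K {g ∈ G | l g = 0} := by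
  let zeros (l : Module.Dual K V) : Set V := {g ∈ G | l g = 0}
  let L : Set (Module.Dual K V) := {l | (∀ g ∈ G, 0 ≤ l g) ∧ l x < 0}
  have hLfin : (zeros '' L).Finite :=
    hG.finite_subsets.subset (image_subset_iff.2 fun l _ => sep_subset _ _)
  have hLne : (zeros '' L).Nonempty := by
    rw [← image_id G] at hx
    exact Set.Nonempty.image zeros (s := L) (exists_dual_neg_of_notMem_hull hG id hx)
  obtain ⟨_, ⟨l, ⟨hl, hlx⟩, rfl⟩, hmax⟩ := hLfin.exists_maximal hLne
  refine ⟨l, hl, hlx, ?_⟩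
  -- Otherwise `l` could be tilted until a further element of `G` becomes a zero.
  by_contra hker
  obtain ⟨q, hqx, hqZ, hqneg⟩ := exists_dual_neg_of_not_ker_le hspan hlx.ne
    (Submodule.span_le.2 fun g hg => hg.2) hker
  obtain ⟨t, ht, g₁, hg₁, hqg₁, htg₁⟩ := exists_tilt hG hl hqneg
  have htilt : l + t • q ∈ L := ⟨ht, by simpa [hqx] using hlx⟩
  have hzeros : zeros l ⊆ zeros (l + t • q) := fun g hg =>
    ⟨hg.1, by simp [hg.2, LinearMap.mem_ker.1 (hqZ (Submodule.subset_span hg))]⟩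
  exact hqg₁.ne (hqZ (Submodule.subset_span (hmax ⟨_, htilt, rfl⟩ hzeros ⟨hg₁, htg₁⟩)))

end FacetFunctionals

section Envelope

lemma vectorSpan_le_ker {K V : Type*} [Ring K] [AddCommGroup V] [Module K V] {l : V →ₗ[K] K}
    {S : Set V} (h : ∀ p ∈ S, ∀ q ∈ S, l p = l q) : vectorSpan K S ≤ LinearMap.ker l :=
  Submodule.span_le.2 (sub_subset_iff.2 fun p hp q hq => by simp [h p hp q hq])

lemma exists_toExposed_of_notMem_feasibleCone {E : Type*} [AddCommGroup E] [Module ℝ E]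
    [TopologicalSpace E] [T2Space E] [IsTopologicalAddGroup E] [ContinuousSMul ℝ E]
    [FiniteDimensional ℝ E] {s F : Set E} {x : E} (hs : s.Finite) (hspan : vectorSpan ℝ s = ⊤)
    (hF : IsExtreme ℝ (convexHull ℝ s) F) (hFc : Convex ℝ F) (hne : F.Nonempty)
    (hx : x ∉ feasibleCone ℝ (convexHull ℝ s) F) :
    ∃ f : StrongDual ℝ E, 0 < f x ∧ F ⊆ f.toExposed (convexHull ℝ s) ∧
      LinearMap.ker f.toLinearMap ≤ vectorSpan ℝ (f.toExposed (convexHull ℝ s)) := by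
  have hsF : convexHull ℝ (s ∩ F) = F := convexHull_inter_eq_of_isExtreme hF hFc
  have hcone : feasibleCone ℝ (convexHull ℝ s) F = PointedCone.hull ℝ (s - s ∩ F) := by
    rw [← feasibleCone, ← feasibleCone_convexHull s, hsF]
  obtain ⟨v, hv⟩ : (s ∩ F).Nonempty := by rwa [← convexHull_nonempty_iff (𝕜 := ℝ), hsF]
  have hspanG : Submodule.span ℝ (s - s ∩ F) = ⊤ := by
    rw [eq_top_iff, ← hspan, vectorSpan_eq_span_vsub_set_right ℝ hv.1]
    exact Submodule.span_mono (image_subset_iff.2 fun u hu => sub_mem_sub hu hv)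
  rw [hcone] at hx
  obtain ⟨l, hl, hlx, hker⟩ :=
    exists_dual_ker_le_span_zeros (hs.sub (hs.inter_of_left F)) hspanG hx
  have hlF : ∀ w ∈ F, ∀ u ∈ convexHull ℝ s, l w ≤ l u := fun w hw u hu => by
    rw [← sub_nonneg, ← map_sub]
    exact dual_nonneg_of_mem_hull hl (hcone ▸ sub_mem_feasibleCone hu hw)
  let f : StrongDual ℝ E := -l.toContinuousLinearMap
  have hFf : F ⊆ f.toExposed (convexHull ℝ s) := fun w hw =>
    ⟨hF.subset hw, fun u hu => neg_le_neg (hlF w hw u hu)⟩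
  refine ⟨f, neg_pos.2 hlx, hFf, fun y hy => ?_⟩
  have hly : l y = 0 := neg_eq_zero.1 hy
  refine Submodule.span_mono ?_ (hker hly)
  rintro _ ⟨⟨u, hu, w, hw, rfl⟩, huw⟩
  refine ⟨u, ⟨subset_convexHull ℝ s hu, fun p hp => ?_⟩, w, hFf hw.2, rfl⟩
  have hluw : l u = l w := by rwa [map_sub, sub_eq_zero] at huw
  exact neg_le_neg (hluw ▸ hlF w hw.2 p hp)

variable {d : ℕ} {s P F : Set (Fin d → ℝ)}

lemma isFacet_toExposed (hP : Convex ℝ P) (hspan : vectorSpan ℝ P = ⊤)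
    {f : StrongDual ℝ (Fin d → ℝ)} (hf : f.toLinearMap ≠ 0) (hne : (f.toExposed P).Nonempty)
    (hker : LinearMap.ker f.toLinearMap ≤ vectorSpan ℝ (f.toExposed P)) :
    IsFacet P (f.toExposed P) := by
  have hexp : IsExposed ℝ P (f.toExposed P) := ContinuousLinearMap.toExposed.isExposed
  have hvs : vectorSpan ℝ (f.toExposed P) = LinearMap.ker f.toLinearMap :=
    (vectorSpan_le_ker fun p hp q hq => (hq.2 p hp.1).antisymm (hp.2 q hq.1)).antisymm hker
  refine ⟨⟨hne, fun h => ?_, hexp.convex hP, hexp.isExtreme⟩, ?_⟩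
  · rw [h, hspan, eq_comm, LinearMap.ker_eq_top] at hvs
    exact hf hvs
  · have hrank := Module.Dual.finrank_ker_add_one_of_ne_zero hf
    rw [Module.finrank_fin_fun] at hrank
    rw [hvs]
    exact Nat.eq_sub_of_add_eq hrank

lemma feasibleCone_subset_EnvF : (feasibleCone ℝ P F : Set (Fin d → ℝ)) ⊆ EnvF P F :=
  fun _ hx _ _ hFF' ℓ _ _ hℓ => dual_nonneg_of_mem_hull (l := dotProductEquiv ℝ (Fin d) ℓ)
    (forall_mem_image2.2 fun u hu w hw => hℓ u hu w (hFF' hw)) hx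

lemma feasibleCone_eq_EnvF (hs : s.Finite) (hspan : vectorSpan ℝ s = ⊤)
    (hF : IsProperFace (convexHull ℝ s) F) :
    (feasibleCone ℝ (convexHull ℝ s) F : Set (Fin d → ℝ)) = EnvF (convexHull ℝ s) F := by
  refine feasibleCone_subset_EnvF.antisymm fun x hx => ?_
  by_contra hxC
  obtain ⟨f, hfx, hFf, hker⟩ :=
    exists_toExposed_of_notMem_feasibleCone hs hspan hF.isExtreme hF.convex hF.nonempty hxC
  have hf : f.toLinearMap ≠ 0 := fun h => hfx.ne' (LinearMap.congr_fun h x)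
  have hspan' : vectorSpan ℝ (convexHull ℝ s) = ⊤ := by
    rwa [← direction_affineSpan, affineSpan_convexHull, direction_affineSpan]
  have hfacet := isFacet_toExposed (convex_convexHull ℝ s) hspan' hf (hF.nonempty.mono hFf) hker
  obtain ⟨ℓ, hℓ⟩ := (dotProductEquiv ℝ (Fin d)).surjective (-f.toLinearMap)
  have hdotp (y : Fin d → ℝ) : dotp ℓ y = -f y := LinearMap.congr_fun hℓ y
  have hℓ0 : ℓ ≠ 0 := by
    rintro rfl
    exact hf (by simpa [eq_comm] using hℓ)
  have hnonneg := hx _ hfacet hFf ℓ hℓ0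
    (fun u hu w hw => by
      rw [hdotp, map_sub, (hw.2 u hu.1).antisymm (hu.2 w hw.1), sub_self, neg_zero])
    (fun u hu w hw => by rw [hdotp, map_sub, neg_sub, sub_nonneg]; exact hw.2 u hu)
  rw [hdotp, neg_nonneg] at hnonneg
  exact hfx.not_ge hnonneg

lemma vectorSpan_coeR_image_eq_top {A : Set (Fin d → ℤ)} (hA : AddSubgroup.closure (A - A) = ⊤) :
    vectorSpan ℝ (coeR '' A) = ⊤ := by
  have hmem (x : Fin d → ℤ) : coeR x ∈ vectorSpan ℝ (coeR '' A) := by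
    have hle : AddSubgroup.closure (A - A) ≤
        (vectorSpan ℝ (coeR '' A)).toAddSubgroup.comap (coeRHom d) :=
      (AddSubgroup.closure_le _).2 (sub_subset_iff.2 fun u hu v hv => Submodule.subset_span
        ⟨coeR u, mem_image_of_mem _ hu, coeR v, mem_image_of_mem _ hv, (coeR_sub u v).symm⟩)
    exact hle (hA ▸ AddSubgroup.mem_top x)
  rw [eq_top_iff, ← (Pi.basisFun ℝ (Fin d)).span_eq, Submodule.span_le]
  rintro _ ⟨i, rfl⟩
  have hi : Pi.basisFun ℝ (Fin d) i = coeR (Pi.single i 1) := by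
    ext j
    simp [coeR, Pi.single_apply]
  exact hi ▸ hmem _

end Envelope

section Horoballs

variable {d : ℕ} {A H : Set (Fin d → ℤ)} {F : Set (Fin d → ℝ)}

lemma isHoroballZ_HF (hA : A.Finite) (hF : IsProperFace (convexHull ℝ (coeR '' A)) F) :
    IsHoroballZ A (HF A F) := by
  refine ⟨?_, HF_ne_univ hA hF, ?_⟩ <;> rw [HF_eq_diffMonoid]
  · exact ⟨0, zero_mem _⟩
  · have hsub : ExtZ F ⊆ A := ExtZ_subset hF.isExtreme
    simpa only [singleton_add] using
      exists_convergesTo_diffMonoid (hA.subset hsub) hsub (ExtZ_nonempty hA hF)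

lemma zero_mem_HF : 0 ∈ HF A F :=
  zero_mem (AddSubmonoid.closure _)

lemma convexHull_coeR_image_HF_eq_EnvF (hA : A.Finite) (hgen : AddSubgroup.closure (A - A) = ⊤)
    (hF : IsProperFace (convexHull ℝ (coeR '' A)) F) :
    convexHull ℝ (coeR '' HF A F) = EnvF (convexHull ℝ (coeR '' A)) F := by
  rw [convexHull_coeR_image_HF hA hF,
    feasibleCone_eq_EnvF (hA.image _) (vectorSpan_coeR_image_eq_top hgen) hF]

lemma exists_eq_vadd_HF (hA : A.Finite) (hgen : AddSubgroup.closure (A - A) = ⊤)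
    (hH : IsHoroballZ A H) :
    ∃ F, IsProperFace (convexHull ℝ (coeR '' A)) F ∧ ∃ v : Fin d → ℤ, H = v +ᵥ HF A F := by
  obtain ⟨hne, hHuniv, g, n, hn, hlim⟩ := hH
  simp only [← singleton_add] at hlim
  obtain ⟨S, hSA, hSne, v, rfl⟩ := exists_eq_vadd_diffMonoid hA hn hlim hne
  obtain htop | ⟨F, hF, hFS⟩ := diffMonoid_eq_top_or_exists_HF_eq hA hgen hSA hSne
  · simp [htop] at hHuniv
  · exact ⟨F, hF, v, by rw [hFS]⟩

lemma eq_HF_of_convexHull_eq (hA : A.Finite) (hgen : AddSubgroup.closure (A - A) = ⊤)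
    (hF : IsProperFace (convexHull ℝ (coeR '' A)) F) (hH : IsHoroballZ A H) (h0 : 0 ∈ H)
    (hconv : convexHull ℝ (coeR '' H) = EnvF (convexHull ℝ (coeR '' A)) F) : H = HF A F := by
  obtain ⟨F', hF', v, rfl⟩ := exists_eq_vadd_HF hA hgen hH
  rw [← convexHull_coeR_image_HF_eq_EnvF hA hgen hF, coeR_image_vadd, convexHull_vadd,
    convexHull_coeR_image_HF hA hF, convexHull_coeR_image_HF hA hF'] at hconv
  obtain rfl : F = F' := eq_of_feasibleCone_eq (convex_convexHull ℝ _) hF hF' <|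
    Submodule.toAddSubmonoid_injective (eq_of_coe_eq_vadd hconv.symm)
  rw [HF_eq_diffMonoid] at h0 ⊢
  have hnv : -v ∈ diffMonoid A (ExtZ F) := by
    simpa [mem_vadd_set_iff_neg_vadd_mem] using h0
  have hcone : coeR v ∈ feasibleCone ℝ (convexHull ℝ (coeR '' A)) F := by
    rw [← SetLike.mem_coe, ← hconv]
    exact ⟨0, zero_mem _, add_zero _⟩
  rw [← hull_coeR_image_HF hA hF, HF_eq_diffMonoid] at hcone
  exact vadd_coe_eq_self (mem_of_coeR_mem_hull_of_neg_mem hcone hnv) hnv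

theorem horoballs_are_faces_of_convexHull_general {d : ℕ} (A : Set (Fin d → ℤ)) (hfin : A.Finite)
    (hgen : AddSubgroup.closure (A - A) = ⊤) :
    (∀ F : Set (Fin d → ℝ), IsProperFace (convexHull ℝ (coeR '' A)) F →
      (IsHoroballZ A (HF A F) ∧ 0 ∈ HF A F ∧
        convexHull ℝ (coeR '' HF A F) = EnvF (convexHull ℝ (coeR '' A)) F) ∧
      ∀ H, IsHoroballZ A H → 0 ∈ H →
        convexHull ℝ (coeR '' H) = EnvF (convexHull ℝ (coeR '' A)) F → H = HF A F) ∧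
    ∀ H, IsHoroballZ A H →
      ∃! F : Set (Fin d → ℝ), IsProperFace (convexHull ℝ (coeR '' A)) F ∧
        ∃ v, H = (v + ·) '' HF A F := by
  refine ⟨fun F hF => ⟨⟨isHoroballZ_HF hfin hF, zero_mem_HF, ?_⟩, fun H => ?_⟩, fun H hH => ?_⟩
  · exact convexHull_coeR_image_HF_eq_EnvF hfin hgen hF
  · exact eq_HF_of_convexHull_eq hfin hgen hF
  · obtain ⟨F, hF, v, rfl⟩ := exists_eq_vadd_HF hfin hgen hH
    refine ⟨F, ⟨hF, v, rfl⟩, fun F' ⟨hF', w, hw⟩ => ?_⟩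
    have htranslate : w +ᵥ HF A F' = v +ᵥ HF A F := hw.symm
    rw [← eq_neg_vadd_iff, ← add_vadd] at htranslate
    exact eq_of_HF_eq_vadd_HF hfin hF' hF htranslate

end Horoballs

/-- Horoballs in `ℤ^d` correspond to faces of `conv(A)`: for every face `F`
of `conv(A)`, `H_F` is the unique `A`-horoball containing `0` whose convex
hull is `Env_F`; conversely, every `A`-horoball is a translate `v + H_F` for a
uniquely determined face `F` of `conv(A)`. -/
theorem horoballs_are_faces_of_convexHull {d : ℕ}
    (A : Set (Fin d → ℤ)) (hfin : A.Finite) (h0 : (0 : Fin d → ℤ) ∈ A)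
    (hgen : PosGenZ A) :
    (∀ F : Set (Fin d → ℝ), IsProperFace (convexHull ℝ (coeR '' A)) F →
      (IsHoroballZ A (HF A F) ∧ (0 : Fin d → ℤ) ∈ HF A F ∧
          convexHull ℝ (coeR '' HF A F) = EnvF (convexHull ℝ (coeR '' A)) F) ∧
        ∀ H : Set (Fin d → ℤ), IsHoroballZ A H → (0 : Fin d → ℤ) ∈ H →
          convexHull ℝ (coeR '' H) = EnvF (convexHull ℝ (coeR '' A)) F →
            H = HF A F) ∧
      ∀ H : Set (Fin d → ℤ), IsHoroballZ A H →
        ∃! F : Set (Fin d → ℝ),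
          IsProperFace (convexHull ℝ (coeR '' A)) F ∧
            ∃ v : Fin d → ℤ, H = (v + ·) '' HF A F :=
  horoballs_are_faces_of_convexHull_general A hfin
    (addSubgroup_closure_sub_eq_top h0 fun g => (hgen g).imp fun _ hn => hn.2)
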